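/- Let G be a locally coherent Grothendieck category of finite global dimension d, and let X be a finitely presented object of G. Then the stalk complex X[0] is a compact object of D(G): for any family (M_i)_{i∈I} of objects of D(G), the canonical map ∐_{i∈I} Hom_{D(G)}(X[0], M_i) → Hom_{D(G)}(X[0], ∐_{i∈I} M_i) is bijective. -/

import Mathlib

open CategoryTheory CategoryTheory.Limits DirectSum

universe w v u

variable {G : Type u} [Category.{v} G] [Abelian G] [HasColimits G]
  [HasDerivedCategory.{w} G]

/-- The finitely presented objects of `G`: those `X` such that `Hom_G(X, ?)` preserves
filtered colimits (direct limits). -/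
def fpSet : Set G :=
  {X | ∀ (J : Type v) (_ : SmallCategory J) (_ : IsFiltered J),
    Nonempty (PreservesColimitsOfShape J (coyoneda.obj (Opposite.op X)))}

/-- The canonical map `⊕ᵢ Hom(P, Mᵢ) ⟶ Hom(P, Q)` determined by morphisms `jᵢ : Mᵢ ⟶ Q`. -/
noncomputable def cmap {D : Type*} [Category D] [Preadditive D]
    (P : D) {I : Type v} [DecidableEq I] (M : I → D) {Q : D}
    (j : ∀ i, M i ⟶ Q) : (⨁ (i : I), (P ⟶ M i)) →+ (P ⟶ Q) :=
  DirectSum.toAddMonoid fun i =>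
    AddMonoidHom.mk' (fun φ => φ ≫ j i) (fun _ _ => Preadditive.add_comp _ _ _ _ _ _)

/-!
By calculus of fractions, a morphism `X[n] ⟶ ∐ M` in the derived category becomes, after
precomposition with some epimorphism `p : P ⟶ X`, a morphism of complexes `P[n] ⟶ ∐ K`. Local
coherence allows `P` to be finitely presented, and then this morphism lands in finitely many
summands. Killing these summands in `∐ M` therefore makes the original morphism factor through the
connecting morphism `X[n] ⟶ (kernel p)[n + 1]`, where `kernel p` is again finitely presented.
After iterating beyond the global dimension, the connecting morphisms compose to zero, so the
original morphism lands in finitely many summands of `∐ M`.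
-/

section SigmaKill

variable {D : Type*} [Category* D] {I : Type*} [DecidableEq I] (M : I → D) [HasCoproduct M]

/-- The endomorphism of `∐ M` which is zero on the summands indexed by `S` and the identity on the
others. A morphism into `∐ M` lands in the summands indexed by `S` when composing with it gives
zero. -/
noncomputable def sigmaKill [HasZeroMorphisms D] (S : Finset I) : ∐ M ⟶ ∐ M :=
  Sigma.desc fun i => if i ∈ S then 0 else Sigma.ι M i

lemma ι_sigmaKill_of_mem [HasZeroMorphisms D] {S : Finset I} {i : I} (hi : i ∈ S) :
    Sigma.ι M i ≫ sigmaKill M S = 0 := by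
  simp [sigmaKill, hi]

lemma ι_sigmaKill_of_notMem [HasZeroMorphisms D] {S : Finset I} {i : I} (hi : i ∉ S) :
    Sigma.ι M i ≫ sigmaKill M S = Sigma.ι M i := by
  simp [sigmaKill, hi]

lemma sigmaKill_empty [HasZeroMorphisms D] : sigmaKill M ∅ = 𝟙 _ :=
  Sigma.hom_ext _ _ fun i => by simp [sigmaKill]

lemma sigmaKill_comp_sigmaKill [HasZeroMorphisms D] (S T : Finset I) :
    sigmaKill M S ≫ sigmaKill M T = sigmaKill M (S ∪ T) :=
  Sigma.hom_ext _ _ fun i => by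
    by_cases hS : i ∈ S <;> by_cases hT : i ∈ T <;> simp [sigmaKill, hS, hT]

lemma sum_π_ι_add_sigmaKill [Preadditive D] (S : Finset I) :
    ∑ i ∈ S, Sigma.π M i ≫ Sigma.ι M i + sigmaKill M S = 𝟙 _ := by
  refine Sigma.hom_ext _ _ fun k => ?_
  have off_diagonal (i : I) (hi : i ≠ k) : Sigma.ι M k ≫ Sigma.π M i ≫ Sigma.ι M i = 0 := by
    rw [Sigma.ι_π_of_ne_assoc _ hi.symm, zero_comp]
  rw [Preadditive.comp_add, Preadditive.comp_sum, Category.comp_id]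
  by_cases hk : k ∈ S
  · rw [Finset.sum_eq_single_of_mem k hk fun i _ => off_diagonal i, ι_sigmaKill_of_mem M hk]
    simp
  · rw [Finset.sum_eq_zero fun i hi => off_diagonal i (ne_of_mem_of_not_mem hi hk),
      ι_sigmaKill_of_notMem M hk, zero_add]

end SigmaKill

section CanonicalMap

variable {D : Type*} [Category* D] [Preadditive D] {I : Type v} [DecidableEq I]

lemma cmap_of (P : D) (M : I → D) {Q : D} (j : ∀ i, M i ⟶ Q) (i : I) (a : P ⟶ M i) :
    cmap P M j (DirectSum.of (fun i => P ⟶ M i) i a) = a ≫ j i := by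
  simp [cmap]

variable (P : D) (M : I → D) [HasCoproduct M]

lemma cmap_ι_comp_π (x : ⨁ i, (P ⟶ M i)) (i : I) :
    cmap P M (fun i => Sigma.ι M i) x ≫ Sigma.π M i = x i := by
  induction x using DirectSum.induction_on with
  | zero => simp
  | of k a =>
    rw [cmap_of, Category.assoc]
    obtain rfl | hki := eq_or_ne k i
    · simp
    · rw [Sigma.ι_π_of_ne _ hki, comp_zero, DirectSum.of_eq_of_ne _ _ _ hki.symm]
  | add x y hx hy => simp [hx, hy]

lemma cmap_ι_injective : Function.Injective (cmap P M fun i => Sigma.ι M i) := fun x y hxy =>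
  DFinsupp.ext fun i => by rw [← cmap_ι_comp_π, hxy, cmap_ι_comp_π]

lemma exists_cmap_ι_eq_of_comp_sigmaKill_eq_zero {f : P ⟶ ∐ M} {S : Finset I}
    (hf : f ≫ sigmaKill M S = 0) : ∃ x, cmap P M (fun i => Sigma.ι M i) x = f := by
  refine ⟨∑ i ∈ S, DirectSum.of _ i (f ≫ Sigma.π M i), ?_⟩
  calc cmap P M (fun i => Sigma.ι M i) (∑ i ∈ S, DirectSum.of _ i (f ≫ Sigma.π M i))
      = f ≫ ∑ i ∈ S, Sigma.π M i ≫ Sigma.ι M i := by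
        simp only [map_sum, cmap_of, Preadditive.comp_sum, Category.assoc]
    _ = f ≫ (∑ i ∈ S, Sigma.π M i ≫ Sigma.ι M i + sigmaKill M S) := by
        rw [Preadditive.comp_add, hf, add_zero]
    _ = f := by rw [sum_π_ι_add_sigmaKill, Category.comp_id]

end CanonicalMap

section FinitelyPresentable

open CoproductsFromFiniteFiltered

variable {C : Type u} [Category.{v} C]

lemma mem_fpSet_iff {X : C} : X ∈ fpSet (G := C) ↔ IsFinitelyPresentable.{v} X := by
  rw [isFinitelyPresentable_iff_preservesFilteredColimitsOfSize]
  exact ⟨fun h => ⟨fun J _ _ => (h J inferInstance inferInstance).some⟩,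
    fun h J _ _ => ⟨h.preserves_filtered_colimits J⟩⟩

lemma isFinitelyPresentable_sigma {T : Type*} [Finite T] (B : T → C) [HasCoproduct B]
    (hB : ∀ t, IsFinitelyPresentable.{v} (B t)) : IsFinitelyPresentable.{v} (∐ B) := by
  have := Cardinal.fact_isRegular_aleph0.{v}
  have (t : Discrete T) :
      IsCardinalPresentable ((Discrete.functor B).obj t) Cardinal.aleph0.{v} := hB t.as
  refine isCardinalPresentable_of_isColimit'.{v} _
    (colimit.isColimit (Discrete.functor B)) _ ?_
  rw [hasCardinalLT_aleph0_iff]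
  infer_instance

lemma exists_finset_forall_comp_eq_zero [HasZeroMorphisms C] [HasColimits C]
    {I : Type v} (B : I → C) {A : C} [IsFinitelyPresentable.{v} A] (g : A ⟶ ∐ B) :
    ∃ S : Finset I, ∀ ⦃W : C⦄ (h : ∐ B ⟶ W), (∀ i ∈ S, Sigma.ι B i ≫ h = 0) → g ≫ h = 0 := by
  classical
  obtain ⟨S, a, ha⟩ := IsFinitelyPresentable.exists_hom_of_isColimit
    (isColimitFiniteSubproductsCocone B) g
  refine ⟨S.image Discrete.as, fun W h hh => ?_⟩
  have hS : (finiteSubcoproductsCocone B).ι.app S ≫ h = 0 := by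
    refine Sigma.hom_ext _ _ fun s => ?_
    exact (Sigma.ι_desc_assoc _ _ _).trans
      ((hh s.1.as (Finset.mem_image_of_mem _ s.2)).trans comp_zero.symm)
  calc g ≫ h = a ≫ (finiteSubcoproductsCocone B).ι.app S ≫ h := by
        rw [← ha]; exact Category.assoc _ _ _
    _ = 0 := by rw [hS, comp_zero]

-- The cokernels of `c.ι.app j ≫ q` have colimit zero, so `X ⟶ coker (c.ι.app j ≫ q)`, being
-- zero in the colimit, is already zero for some `j`.
lemma exists_epi_ι_app_comp_of_isColimit [Abelian C] {J : Type v} [SmallCategory J] [IsFiltered J]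
    [HasColimitsOfShape J C] {F : J ⥤ C} {c : Cocone F} (hc : IsColimit c) {X : C}
    [IsFinitelyPresentable.{v} X] {q : c.pt ⟶ X} (hq : Epi q) : ∃ j, Epi (c.ι.app j ≫ q) := by
  let τ : F ⟶ (Functor.const J).obj X := c.ι ≫ (Functor.const J).map q
  let π (j : J) : X ⟶ (cokernel τ).obj j := (cokernel.π τ).app j
  have π_map {i j : J} (u : i ⟶ j) : π i ≫ (cokernel τ).map u = π j := by
    simpa using ((cokernel.π τ).naturality u).symm
  have τ_π (j : J) : (c.ι.app j ≫ q) ≫ π j = 0 := congr_app (cokernel.condition τ) j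
  have π_colimit (i j : J) :
      π i ≫ colimit.ι (cokernel τ) i = π j ≫ colimit.ι (cokernel τ) j := by
    rw [← colimit.w _ (IsFiltered.leftToMax i j), ← colimit.w _ (IsFiltered.rightToMax i j),
      reassoc_of% π_map, reassoc_of% π_map]
  have π_colimit_eq_zero (i : J) : π i ≫ colimit.ι (cokernel τ) i = 0 := by
    rw [← cancel_epi q, comp_zero]
    refine hc.hom_ext fun j => ?_
    rw [π_colimit i j, comp_zero, ← Category.assoc, ← Category.assoc, τ_π, zero_comp]
  obtain ⟨i⟩ : Nonempty J := IsFiltered.nonempty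
  obtain ⟨j, u, u', hu⟩ := IsFinitelyPresentable.exists_eq_of_isColimit
    (colimit.isColimit (cokernel τ)) (π i) (0 : X ⟶ (cokernel τ).obj i)
    ((π_colimit_eq_zero i).trans zero_comp.symm)
  have hπ : π j = 0 := by rw [← π_map u, hu, zero_comp]
  exact ⟨j, ((ShortComplex.exact_cokernel τ).map ((evaluation J C).obj j)).epi_f hπ⟩

end FinitelyPresentable

/-- The conditions on finitely presented objects in the definition of a locally coherent category:
they contain a separating family indexed by a set and they are closed under kernels. -/
structure IsLocallyCoherent (C : Type u) [Category.{v} C] [HasZeroMorphisms C] : Prop where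
  exists_isSeparating : ∃ (ι : Type v) (B : ι → C),
    (∀ i, IsFinitelyPresentable.{v} (B i)) ∧ (ObjectProperty.ofObj B).IsSeparating
  isClosedUnderKernels : (ObjectProperty.isFinitelyPresentable.{v} C).IsClosedUnderKernels

namespace IsLocallyCoherent

open CoproductsFromFiniteFiltered

variable {C : Type u} [Category.{v} C] [Abelian C]

lemma of_fpSet
    (hgen : ∀ ⦃X Y : C⦄ (f : X ⟶ Y), f ≠ 0 → ∃ Z ∈ fpSet (G := C), ∃ g : Z ⟶ X, g ≫ f ≠ 0)
    (hker : ∀ ⦃X Y : C⦄ (f : X ⟶ Y), X ∈ fpSet (G := C) → Y ∈ fpSet (G := C) →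
      kernel f ∈ fpSet (G := C))
    (hsmall : ∃ (ι : Type v) (B : ι → C), (∀ i, B i ∈ fpSet (G := C)) ∧
      ∀ X ∈ fpSet (G := C), ∃ i, Nonempty (X ≅ B i)) : IsLocallyCoherent C where
  exists_isSeparating := by
    obtain ⟨ι, B, hB, exists_iso⟩ := hsmall
    refine ⟨ι, B, fun i => mem_fpSet_iff.1 (hB i), (Preadditive.isSeparating_iff _).2 ?_⟩
    intro X Y f hf
    by_contra hne
    obtain ⟨Z, hZ, g, hg⟩ := hgen f hne
    obtain ⟨i, ⟨e⟩⟩ := exists_iso Z hZ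
    exact hg (by simpa using e.hom ≫= hf (B i) ⟨i⟩ (e.inv ≫ g))
  isClosedUnderKernels.kernels_le := by
    rintro _ ⟨f, k, hk, hX, hY⟩
    let e : kernel f ≅ _ := (kernelIsKernel f).conePointUniqueUpToIso hk
    have : IsFinitelyPresentable.{v} (kernel f) :=
      mem_fpSet_iff.1 (hker f (mem_fpSet_iff.2 hX) (mem_fpSet_iff.2 hY))
    have := Cardinal.fact_isRegular_aleph0.{v}
    exact isCardinalPresentable_of_iso e _

lemma exists_epi_comp [HasColimits C] (hC : IsLocallyCoherent C) {Z X : C} (p : Z ⟶ X) [Epi p]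
    [IsFinitelyPresentable.{v} X] :
    ∃ (P : C) (_ : IsFinitelyPresentable.{v} P) (u : P ⟶ Z), Epi (u ≫ p) := by
  obtain ⟨ι, B, hB, hsep⟩ := hC.exists_isSeparating
  let summand (t : Σ i, (B i ⟶ Z)) : C := B t.1
  let cover : ∐ summand ⟶ Z := Sigma.desc fun t => t.2
  have : Epi cover := (Preadditive.epi_iff_cancel_zero _).2 fun W h hh =>
    (Preadditive.isSeparating_iff _).1 hsep h <| by
      rintro _ ⟨i⟩ g
      simpa [cover] using Sigma.ι summand ⟨i, g⟩ ≫= hh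
  obtain ⟨S, hS⟩ := exists_epi_ι_app_comp_of_isColimit
    (isColimitFiniteSubproductsCocone summand) (epi_comp cover p)
  let u : (∐ fun t : S => summand t.1.as) ⟶ Z := (finiteSubcoproductsCocone summand).ι.app S ≫ cover
  exact ⟨_, isFinitelyPresentable_sigma _ fun t : S => hB t.1.as.1, u, by
    rwa [show u ≫ p = _ from Category.assoc _ cover p]⟩

end IsLocallyCoherent

section ChainComplex

variable {C : Type u} [Category.{v} C] {ι : Type*} [DecidableEq ι] {c : ComplexShape ι} {n : ι}

lemma exists_finset_single_comp_sigmaKill_eq_zero [Preadditive C] [HasZeroObject C] [HasColimits C]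
    {I : Type v} [DecidableEq I] (K : I → HomologicalComplex C c)
    {A : C} [IsFinitelyPresentable.{v} A] (φ : (HomologicalComplex.single C c n).obj A ⟶ ∐ K) :
    ∃ S : Finset I, φ ≫ sigmaKill K S = 0 := by
  let comparison : (∐ fun i => (K i).X n) ⟶ (∐ K).X n :=
    sigmaComparison (HomologicalComplex.eval C c n) K
  have : IsIso comparison :=
    inferInstanceAs (IsIso (sigmaComparison (HomologicalComplex.eval C c n) K))
  obtain ⟨S, hS⟩ := exists_finset_forall_comp_eq_zero (fun i => (K i).X n)
    ((HomologicalComplex.singleObjXSelf c n A).inv ≫ φ.f n ≫ inv comparison)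
  have killed (i : I) (hi : i ∈ S) :
      Sigma.ι (fun i => (K i).X n) i ≫ comparison ≫ (sigmaKill K S).f n = 0 := by
    have ι_comparison : Sigma.ι (fun i => (K i).X n) i ≫ comparison = (Sigma.ι K i).f n :=
      Sigma.ι_desc _ _
    rw [reassoc_of% ι_comparison, ← HomologicalComplex.comp_f, ι_sigmaKill_of_mem K hi,
      HomologicalComplex.zero_f]
  refine ⟨S, HomologicalComplex.from_single_hom_ext ?_⟩
  rw [← cancel_epi (HomologicalComplex.singleObjXSelf c n A).inv]
  simpa using hS _ killed

lemma epi_iCycles_comp_of_quasiIsoAt [Abelian C] {K : HomologicalComplex C c} {X : C}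
    (t : K ⟶ (HomologicalComplex.single C c n).obj X) [QuasiIsoAt t n] :
    Epi (K.iCycles n ≫ t.f n ≫ (HomologicalComplex.singleObjXSelf c n X).hom) := by
  have eq_homologyπ_comp :
      K.iCycles n ≫ t.f n ≫ (HomologicalComplex.singleObjXSelf c n X).hom =
        K.homologyπ n ≫ HomologicalComplex.homologyMap t n ≫
          (HomologicalComplex.singleObjHomologySelfIso c n X).hom := by
    rw [HomologicalComplex.homologyπ_naturality_assoc,
      HomologicalComplex.homologyπ_singleObjHomologySelfIso_hom,
      HomologicalComplex.singleObjCyclesSelfIso_hom, HomologicalComplex.cyclesMap_i_assoc]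
  rw [eq_homologyπ_comp]
  infer_instance

end ChainComplex

section DerivedCategory

open DerivedCategory Pretriangulated

variable {C : Type u} [Category.{v} C] [Abelian C] [HasDerivedCategory.{w} C]

-- In a fraction `Q.map g ∘ (Q.map t)⁻¹` representing `f`, the quasi-isomorphism `t` onto the
-- stalk complex of `X` is an epimorphism on the cycles in degree `n`.
lemma exists_epi_singleFunctor_map_comp_eq_Q_map {X : C} {n : ℤ} {L : CochainComplex C ℤ}
    (f : (singleFunctor C n).obj X ⟶ Q.obj L) :
    ∃ (Z : C) (p : Z ⟶ X) (_ : Epi p)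
      (φ : (HomologicalComplex.single C (ComplexShape.up ℤ) n).obj Z ⟶ L),
      (singleFunctor C n).map p ≫ f = Q.map φ := by
  obtain ⟨K, t, ht, g, rfl⟩ :=
    right_fac (X := (HomologicalComplex.single C (ComplexShape.up ℤ) n).obj X) f
  have : QuasiIso t := (isIso_Q_map_iff_quasiIso C t).1 ht
  let p : K.cycles n ⟶ X :=
    K.iCycles n ≫ t.f n ≫ (HomologicalComplex.singleObjXSelf (ComplexShape.up ℤ) n X).hom
  let cyclesHom : (HomologicalComplex.single C (ComplexShape.up ℤ) n).obj (K.cycles n) ⟶ K :=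
    HomologicalComplex.mkHomFromSingle (K.iCycles n) fun k _ => K.iCycles_d n k
  have cyclesHom_comp : cyclesHom ≫ t = (HomologicalComplex.single C _ n).map p := by
    apply HomologicalComplex.from_single_hom_ext
    rw [HomologicalComplex.single_map_f_self, HomologicalComplex.comp_f,
      HomologicalComplex.mkHomFromSingle_f]
    simp [p]
  refine ⟨_, p, epi_iCycles_comp_of_quasiIsoAt t, cyclesHom ≫ g, ?_⟩
  change Q.map ((HomologicalComplex.single C _ n).map p) ≫ inv (Q.map t) ≫ Q.map g = _
  rw [← cyclesHom_comp, Functor.map_comp, Functor.map_comp, Category.assoc,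
    IsIso.hom_inv_id_assoc]

lemma exists_singleFunctor_fac_of_shortExact {S : ShortComplex C} (hS : S.ShortExact) {n n' : ℤ}
    (hn : n' + 1 = n) {Y : DerivedCategory C} (f : (singleFunctor C n).obj S.X₃ ⟶ Y)
    (hf : (singleFunctor C n).map S.g ≫ f = 0) :
    ∃ (δ : (singleFunctor C n).obj S.X₃ ⟶ (singleFunctor C n').obj S.X₁)
      (f' : (singleFunctor C n').obj S.X₁ ⟶ Y), f = δ ≫ f' := by
  let hS' := hS.map_of_exact (HomologicalComplex.single C (ComplexShape.up ℤ) n)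
  obtain ⟨f', hf'⟩ := Triangle.yoneda_exact₃ _ (triangleOfSES_distinguished hS') f hf
  let shiftIso := ((singleFunctors C).shiftIso 1 n' n (by lia)).app S.X₁
  exact ⟨triangleOfSESδ hS' ≫ shiftIso.hom, shiftIso.inv ≫ f',
    hf'.trans ((Category.assoc _ _ _).trans (congrArg _ (shiftIso.hom_inv_id_assoc f'))).symm⟩

-- Resolving each `M i` by the source of a fraction representing `Sigma.ι M i` makes `∐ M` a retract
-- of `Q.obj (∐ K)` although `Q` need not preserve coproducts when they are not exact in `C`.
lemma exists_Q_sigma_hom {I : Type*} [HasCoproductsOfShape I C] (M : I → DerivedCategory C)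
    [HasCoproduct M] :
    ∃ (K : I → CochainComplex C ℤ) (e : ∀ i, M i ≅ Q.obj (K i)) (r : Q.obj (∐ K) ⟶ ∐ M),
      ∀ i, Q.map (Sigma.ι K i) ≫ r = (e i).inv ≫ Sigma.ι M i := by
  let eL : Q.obj (Q.objPreimage (∐ M)) ≅ ∐ M := Q.objObjPreimageIso (∐ M)
  have exists_rep (i : I) : ∃ (K : CochainComplex C ℤ) (e : M i ≅ Q.obj K)
      (g : K ⟶ Q.objPreimage (∐ M)), Q.map g ≫ eL.hom = e.inv ≫ Sigma.ι M i := by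
    let e₀ := Q.objObjPreimageIso (M i)
    obtain ⟨K, s, _, g, hg⟩ := right_fac (e₀.hom ≫ Sigma.ι M i ≫ eL.inv)
    refine ⟨K, e₀.symm ≪≫ (asIso (Q.map s)).symm, g, ?_⟩
    have hg' : Q.map g = Q.map s ≫ e₀.hom ≫ Sigma.ι M i ≫ eL.inv := by simp [hg]
    simp [hg']
  choose K e g hg using exists_rep
  refine ⟨K, e, Q.map (Sigma.desc g) ≫ eL.hom, fun i => ?_⟩
  rw [← Functor.map_comp_assoc, Sigma.ι_desc, hg]

variable [HasColimits C] {I : Type v} [DecidableEq I] (M : I → DerivedCategory C) [HasCoproduct M]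

namespace IsLocallyCoherent

variable {M}

lemma exists_epi_singleFunctor_map_comp_sigmaKill_eq_zero (hC : IsLocallyCoherent C) {X : C}
    [IsFinitelyPresentable.{v} X] {n : ℤ} (f : (singleFunctor C n).obj X ⟶ ∐ M) :
    ∃ (P : C) (_ : IsFinitelyPresentable.{v} P) (p : P ⟶ X) (_ : Epi p) (S : Finset I),
      (singleFunctor C n).map p ≫ f ≫ sigmaKill M S = 0 := by
  obtain ⟨K, e, r, ι_r⟩ := exists_Q_sigma_hom M
  let s : ∐ M ⟶ Q.obj (∐ K) := Sigma.desc fun i => (e i).hom ≫ Q.map (Sigma.ι K i)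
  have s_kill_r (S : Finset I) : s ≫ Q.map (sigmaKill K S) ≫ r = sigmaKill M S := by
    refine Sigma.hom_ext _ _ fun i => ?_
    rw [Sigma.ι_desc_assoc, Category.assoc, ← Functor.map_comp_assoc]
    by_cases hi : i ∈ S
    · simp [ι_sigmaKill_of_mem _ hi]
    · simp [ι_sigmaKill_of_notMem _ hi, ι_r]
  obtain ⟨Z, p, _, φ, hφ⟩ := exists_epi_singleFunctor_map_comp_eq_Q_map (f ≫ s)
  obtain ⟨P, hP, u, hu⟩ := hC.exists_epi_comp p
  obtain ⟨S, hS⟩ := exists_finset_single_comp_sigmaKill_eq_zero K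
    ((HomologicalComplex.single C (ComplexShape.up ℤ) n).map u ≫ φ)
  have hu_p : (singleFunctor C n).map (u ≫ p) ≫ f ≫ s =
      Q.map ((HomologicalComplex.single C _ n).map u ≫ φ) := by
    rw [Functor.map_comp, Category.assoc, hφ, Functor.map_comp]
    rfl
  have hS_Q : Q.map ((HomologicalComplex.single C _ n).map u ≫ φ) ≫ Q.map (sigmaKill K S) = 0 := by
    rw [← Functor.map_comp, hS, Functor.map_zero]
  refine ⟨P, hP, u ≫ p, hu, S, ?_⟩
  calc (singleFunctor C n).map (u ≫ p) ≫ f ≫ sigmaKill M S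
      = (((singleFunctor C n).map (u ≫ p) ≫ f ≫ s) ≫ Q.map (sigmaKill K S)) ≫ r := by
        simp only [← s_kill_r S, Category.assoc]
    _ = 0 := by
        rw [hu_p]
        exact (hS_Q =≫ r).trans zero_comp

lemma exists_comp_sigmaKill_eq_comp_of_add_one_eq (hC : IsLocallyCoherent C) {X : C}
    [IsFinitelyPresentable.{v} X] {n n' : ℤ} (hn : n' + 1 = n)
    (f : (singleFunctor C n).obj X ⟶ ∐ M) :
    ∃ (S : Finset I) (X' : C) (_ : IsFinitelyPresentable.{v} X')
      (δ : (singleFunctor C n).obj X ⟶ (singleFunctor C n').obj X')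
      (f' : (singleFunctor C n').obj X' ⟶ ∐ M), f ≫ sigmaKill M S = δ ≫ f' := by
  obtain ⟨P, hP, p, _, S, hpS⟩ := hC.exists_epi_singleFunctor_map_comp_sigmaKill_eq_zero f
  have shortExact : (ShortComplex.mk (kernel.ι p) p (kernel.condition p)).ShortExact :=
    { exact := ShortComplex.exact_kernel p }
  have hker : IsFinitelyPresentable.{v} (kernel p) :=
    have := hC.isClosedUnderKernels
    ObjectProperty.prop_kernel (.isFinitelyPresentable.{v} C) p hP ‹_›
  exact ⟨S, kernel p, hker, exists_singleFunctor_fac_of_shortExact shortExact hn _ hpS⟩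

lemma exists_comp_sigmaKill_eq_comp (hC : IsLocallyCoherent C) (m : ℕ) {X : C}
    [IsFinitelyPresentable.{v} X] {n n' : ℤ} (hn : n' + m = n)
    (f : (singleFunctor C n).obj X ⟶ ∐ M) :
    ∃ (S : Finset I) (X' : C) (_ : IsFinitelyPresentable.{v} X')
      (δ : (singleFunctor C n).obj X ⟶ (singleFunctor C n').obj X')
      (f' : (singleFunctor C n').obj X' ⟶ ∐ M), f ≫ sigmaKill M S = δ ≫ f' := by
  induction m generalizing n' with
  | zero =>
    obtain rfl : n' = n := by simpa using hn
    exact ⟨∅, X, ‹_›, 𝟙 _, f, by rw [sigmaKill_empty, Category.comp_id, Category.id_comp]⟩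
  | succ m ih =>
    obtain ⟨S, Y, _, δ, g, hg⟩ := ih (n' := n' + 1) (by push_cast at hn; lia)
    obtain ⟨T, X', hX', δ', f', hf'⟩ := hC.exists_comp_sigmaKill_eq_comp_of_add_one_eq rfl g
    refine ⟨S ∪ T, X', hX', δ ≫ δ', f', ?_⟩
    rw [← sigmaKill_comp_sigmaKill, reassoc_of% hg, hf', Category.assoc]

end IsLocallyCoherent

theorem stmt19_general (hC : IsLocallyCoherent C) {X : C} (hX : IsFinitelyPresentable.{v} X) (m : ℕ)
    (hm : ∀ Y : C, IsFinitelyPresentable.{v} Y →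
      ∀ f : (singleFunctor C 0).obj X ⟶ ((singleFunctor C 0).obj Y)⟦(m : ℤ)⟧, f = 0) :
    Function.Bijective (cmap ((singleFunctor C 0).obj X) M fun i => Sigma.ι M i) := by
  refine ⟨cmap_ι_injective _ M, fun f => ?_⟩
  obtain ⟨S, X', hX', δ, f', hf'⟩ := hC.exists_comp_sigmaKill_eq_comp m (neg_add_cancel (m : ℤ)) f
  let shiftIso := ((singleFunctors C).shiftIso (m : ℤ) (-m) 0 (add_neg_cancel _)).app X'
  have hδ : δ = 0 := by
    rw [← cancel_mono shiftIso.inv, zero_comp]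
    exact hm X' hX' (δ ≫ shiftIso.inv)
  exact exists_cmap_ι_eq_of_comp_sigmaKill_eq_zero _ M (hf'.trans (by rw [hδ, zero_comp]))

end DerivedCategory

/-- Let `G` be a locally coherent Grothendieck category (the finitely presented objects form a
skeletally small generating class closed under kernels) of finite global dimension `d`, and
let `X` be a finitely presented object of `G`.  Then the stalk complex `X[0]` is a compact
object of `D(G)`: for every family `(Mᵢ)` of objects of `D(G)` the canonical map
`⊕ᵢ Hom(X[0], Mᵢ) ⟶ Hom(X[0], ∐ᵢ Mᵢ)` is bijective. -/
theorem stmt19 [AB5 G] (G₀ : G) (hsep : IsSeparator G₀)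
    [HasCoproducts.{v} (DerivedCategory G)]
    (hfp_gen : ∀ ⦃X Y : G⦄ (f : X ⟶ Y), f ≠ 0 → ∃ Z ∈ fpSet (G := G), ∃ g : Z ⟶ X, g ≫ f ≠ 0)
    (hfp_ker : ∀ ⦃X Y : G⦄ (f : X ⟶ Y), X ∈ fpSet (G := G) → Y ∈ fpSet (G := G) →
      kernel f ∈ fpSet (G := G))
    (hfp_small : ∃ (ι : Type v) (rep : ι → G), (∀ i, rep i ∈ fpSet (G := G)) ∧
      ∀ X ∈ fpSet (G := G), ∃ i, Nonempty (X ≅ rep i))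
    (d : ℕ)
    (hgldim : ∀ (k : ℤ), (d : ℤ) < k → ∀ M N : G,
      ∀ f : (DerivedCategory.singleFunctor G 0).obj M ⟶
        ((DerivedCategory.singleFunctor G 0).obj N)⟦k⟧, f = 0)
    (X : G) (hX : X ∈ fpSet (G := G)) :
    ∀ (I : Type v) [DecidableEq I] (M : I → DerivedCategory G),
      Function.Bijective (cmap ((DerivedCategory.singleFunctor G 0).obj X) M
        (fun i => Sigma.ι M i)) := by
  exact fun I _ M => stmt19_general M (.of_fpSet hfp_gen hfp_ker hfp_small) (mem_fpSet_iff.1 hX)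
    (d + 1) fun Y _ => hgldim _ (by simp) X Y
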